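/- arXiv:2408.17350 — 3 statements merged into one kernel-verified Lean document; each statement's English description precedes it below -/
import Mathlib

section
/- Let (X,‖·‖) be a real normed space with X ≠ {0} and let ⟦·,·⟧₊ denote the upper JMT pairing of the norm. Let A : X → X be a bounded linear operator and μ(A) a real number such that (‖Id+hA‖−1)/h → μ(A) as h → 0⁺ (operator norm). Then μ(A) = sup{ ⟦Ax,x⟧₊ : x ∈ X, ‖x‖ = 1 }. -/
open Filter Topology

/-!
The bound `⟦Ax,x⟧₊ ≤ μ(A)‖x‖²` comes from `‖(Id + hA)x‖ ≤ ‖Id + hA‖‖x‖` in the limit `h → 0⁺`.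
Conversely, let `s` bound `⟦Ax,x⟧₊` on the unit sphere. Convexity of the norm compares the forward
difference quotients defining the pairing with backward ones, so that
`(1 - hs)‖x‖ ≤ ‖(Id - hA)x‖` for all `h > 0`. Applied to the range of `Id + hA`, the factorization
`(Id - hA)(Id + hA) = Id - h²A²` turns this into `(1 - hs)‖Id + hA‖ ≤ 1 + h²‖A‖²`, with no need to
invert `Id - hA`; letting `h → 0⁺` gives `μ(A) ≤ s`.
-/

section LinearMaps

variable {X Y Z : Type*} [SeminormedAddCommGroup X] [NormedSpace ℝ X]
  [SeminormedAddCommGroup Y] [NormedSpace ℝ Y] [SeminormedAddCommGroup Z] [NormedSpace ℝ Z]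

theorem convexOn_norm_add_smul (x y : X) : ConvexOn ℝ Set.univ fun t : ℝ => ‖y + t • x‖ := by
  simpa [Function.comp_def, AffineMap.lineMap_apply, add_comm] using
    (convexOn_univ_norm (E := X)).comp_affineMap (AffineMap.lineMap y (y + x) : ℝ →ᵃ[ℝ] X)

theorem norm_sub_norm_sub_smul_div_le_norm_add_smul_sub_norm_div (x y : X) {h t : ℝ}
    (hh : 0 < h) (ht : 0 < t) :
    (‖y‖ - ‖y - h • x‖) / h ≤ (‖y + t • x‖ - ‖y‖) / t := by
  simpa [sub_eq_add_neg] using (convexOn_norm_add_smul x y).slope_mono_adjacent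
    (Set.mem_univ (-h)) (Set.mem_univ t) (neg_lt_zero.mpr hh) ht

theorem mul_norm_le_norm_map_of_unit_norm (T : X →ₗ[ℝ] Y) {c : ℝ}
    (hT : ∀ x, ‖x‖ = 1 → c ≤ ‖T x‖) (x : X) : c * ‖x‖ ≤ ‖T x‖ := by
  rcases (norm_nonneg x).eq_or_lt with hx | hx
  · simp [← hx]
  · have hunit : ‖‖x‖⁻¹ • x‖ = 1 := by
      rw [norm_smul, norm_inv, norm_norm, inv_mul_cancel₀ hx.ne']
    have hle := hT _ hunit
    rwa [map_smul, norm_smul, norm_inv, norm_norm, inv_mul_eq_div, le_div_iff₀ hx] at hle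

theorem mul_opNorm_le_opNorm_comp (T : Y →L[ℝ] Z) (S : X →L[ℝ] Y) {c : ℝ}
    (hT : ∀ y, c * ‖y‖ ≤ ‖T y‖) : c * ‖S‖ ≤ ‖T ∘L S‖ := by
  rcases le_or_gt c 0 with hc | hc
  · exact (mul_nonpos_of_nonpos_of_nonneg hc (norm_nonneg S)).trans (norm_nonneg _)
  · rw [mul_comm, ← le_div_iff₀ hc]
    refine S.opNorm_le_bound (by positivity) fun x => ?_
    rw [div_mul_eq_mul_div, le_div_iff₀ hc, mul_comm]
    exact (hT (S x)).trans ((T ∘L S).le_opNorm x)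

theorem mul_opNorm_id_add_le (B : X →L[ℝ] X) {c : ℝ} (hB : ∀ x, c * ‖x‖ ≤ ‖x - B x‖) :
    c * ‖ContinuousLinearMap.id ℝ X + B‖ ≤ 1 + ‖B‖ ^ 2 := by
  have hfactor : (ContinuousLinearMap.id ℝ X - B) ∘L (ContinuousLinearMap.id ℝ X + B) =
      ContinuousLinearMap.id ℝ X - B ∘L B := by
    ext x
    simp
  calc c * ‖ContinuousLinearMap.id ℝ X + B‖
      ≤ ‖(ContinuousLinearMap.id ℝ X - B) ∘L (ContinuousLinearMap.id ℝ X + B)‖ :=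
        mul_opNorm_le_opNorm_comp _ _ hB
    _ = ‖ContinuousLinearMap.id ℝ X - B ∘L B‖ := by rw [hfactor]
    _ ≤ ‖ContinuousLinearMap.id ℝ X‖ + ‖B ∘L B‖ := norm_sub_le _ _
    _ ≤ 1 + ‖B‖ * ‖B‖ := add_le_add ContinuousLinearMap.norm_id_le (B.opNorm_comp_le B)
    _ = 1 + ‖B‖ ^ 2 := by rw [sq]

end LinearMaps

theorem le_of_tendsto_sub_one_div_of_one_sub_mul_le {N : ℝ → ℝ} {μ s c : ℝ}
    (hN : Tendsto (fun h => (N h - 1) / h) (𝓝[>] 0) (𝓝 μ))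
    (hle : ∀ᶠ h in 𝓝[>] 0, (1 - h * s) * N h ≤ 1 + h ^ 2 * c) : μ ≤ s := by
  have hid : Tendsto (fun h : ℝ => h) (𝓝[>] 0) (𝓝 0) := tendsto_id.mono_left nhdsWithin_le_nhds
  have hleft : Tendsto (fun h => (1 - h * s) * ((N h - 1) / h)) (𝓝[>] 0) (𝓝 μ) := by
    simpa using ((hid.mul_const s).const_sub 1).mul hN
  have hright : Tendsto (fun h => s + h * c) (𝓝[>] 0) (𝓝 s) := by
    simpa using (hid.mul_const c).const_add s
  refine le_of_tendsto_of_tendsto hleft hright ?_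
  filter_upwards [self_mem_nhdsWithin, hle] with h (hh : 0 < h) hNh
  rw [← mul_div_assoc, div_le_iff₀ hh]
  linarith

section Pairing

variable {X : Type*} [SeminormedAddCommGroup X] [NormedSpace ℝ X]

/-- `HasUpperJMTPairing x y r` says that the limit defining the upper JMT pairing `⟦x,y⟧₊` exists
and equals `r`. As with `HasDerivAt`, a relation avoids a junk value. -/
def HasUpperJMTPairing (x y : X) (r : ℝ) : Prop :=
  Tendsto (fun h : ℝ => ‖y‖ * ((‖y + h • x‖ - ‖y‖) / h)) (𝓝[>] 0) (𝓝 r)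

/-- `HasLogNorm A μ` says that the limit defining the logarithmic norm of the operator `A` exists
and equals `μ`. -/
def HasLogNorm (A : X →L[ℝ] X) (μ : ℝ) : Prop :=
  Tendsto (fun h : ℝ => (‖ContinuousLinearMap.id ℝ X + h • A‖ - 1) / h) (𝓝[>] 0) (𝓝 μ)

theorem HasUpperJMTPairing.norm_mul_norm_sub_norm_sub_smul_div_le {x y : X} {r h : ℝ}
    (hr : HasUpperJMTPairing x y r) (hh : 0 < h) :
    ‖y‖ * ((‖y‖ - ‖y - h • x‖) / h) ≤ r := by
  refine ge_of_tendsto hr ?_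
  filter_upwards [self_mem_nhdsWithin] with t ht
  exact mul_le_mul_of_nonneg_left
    (norm_sub_norm_sub_smul_div_le_norm_add_smul_sub_norm_div x y hh ht) (norm_nonneg y)

variable {A : X →L[ℝ] X} {μ : ℝ}

theorem HasUpperJMTPairing.le_logNorm_mul_norm_sq {x : X} {r : ℝ}
    (hr : HasUpperJMTPairing (A x) x r) (hμ : HasLogNorm A μ) : r ≤ μ * ‖x‖ ^ 2 := by
  refine le_of_tendsto_of_tendsto hr (hμ.mul_const (‖x‖ ^ 2)) ?_
  filter_upwards [self_mem_nhdsWithin] with h (hh : 0 < h)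
  have hop : ‖x + h • A x‖ ≤ ‖ContinuousLinearMap.id ℝ X + h • A‖ * ‖x‖ :=
    (ContinuousLinearMap.id ℝ X + h • A).le_opNorm x
  calc ‖x‖ * ((‖x + h • A x‖ - ‖x‖) / h)
      ≤ ‖x‖ * ((‖ContinuousLinearMap.id ℝ X + h • A‖ * ‖x‖ - ‖x‖) / h) := by gcongr
    _ = (‖ContinuousLinearMap.id ℝ X + h • A‖ - 1) / h * ‖x‖ ^ 2 := by ring

theorem one_sub_mul_mul_norm_le_of_upperJMTPairing_le {J : X → ℝ} {s h : ℝ}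
    (hJ : ∀ x, ‖x‖ = 1 → HasUpperJMTPairing (A x) x (J x)) (hs : ∀ x, ‖x‖ = 1 → J x ≤ s)
    (hh : 0 < h) (x : X) : (1 - h * s) * ‖x‖ ≤ ‖x - h • A x‖ := by
  refine mul_norm_le_norm_map_of_unit_norm (LinearMap.id - h • A.toLinearMap) (fun u hu => ?_) x
  have hquot := ((hJ u hu).norm_mul_norm_sub_norm_sub_smul_div_le hh).trans (hs u hu)
  rw [hu, one_mul, div_le_iff₀ hh] at hquot
  change 1 - h * s ≤ ‖u - h • A u‖
  linarith

theorem HasLogNorm.le_of_upperJMTPairing_le {J : X → ℝ} {s : ℝ} (hμ : HasLogNorm A μ)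
    (hJ : ∀ x, ‖x‖ = 1 → HasUpperJMTPairing (A x) x (J x)) (hs : ∀ x, ‖x‖ = 1 → J x ≤ s) :
    μ ≤ s := by
  refine le_of_tendsto_sub_one_div_of_one_sub_mul_le (c := ‖A‖ ^ 2) hμ ?_
  filter_upwards [self_mem_nhdsWithin] with h (hh : 0 < h)
  calc (1 - h * s) * ‖ContinuousLinearMap.id ℝ X + h • A‖
      ≤ 1 + ‖h • A‖ ^ 2 :=
        mul_opNorm_id_add_le _ (one_sub_mul_mul_norm_le_of_upperJMTPairing_le hJ hs hh)
    _ = 1 + h ^ 2 * ‖A‖ ^ 2 := by rw [norm_smul, mul_pow, Real.norm_eq_abs, sq_abs]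

theorem lognorm_eq_sup_upper_JMT_pairing_general {J : X → ℝ}
    (hJ : ∀ x, ‖x‖ = 1 → HasUpperJMTPairing (A x) x (J x)) (hμ : HasLogNorm A μ) :
    IsLUB {r : ℝ | ∃ x : X, ‖x‖ = 1 ∧ r = J x} μ := by
  refine ⟨?_, fun s hs => hμ.le_of_upperJMTPairing_le hJ fun x hx => hs ⟨x, hx, rfl⟩⟩
  rintro _ ⟨x, hx, rfl⟩
  simpa [hx] using (hJ x hx).le_logNorm_mul_norm_sq hμ

end Pairing

/-- the logarithmic norm equals the supremum over unit vectors
of the upper JMT pairing `⟦Ax,x⟧₊`. -/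
theorem lognorm_eq_sup_upper_JMT_pairing
    (X : Type*) [NormedAddCommGroup X] [NormedSpace ℝ X] [Nontrivial X]
    (Jp : X → X → ℝ)
    (hJp : ∀ x y : X, Tendsto (fun h : ℝ => ‖y‖ * ((‖y + h • x‖ - ‖y‖) / h))
      (𝓝[>] (0:ℝ)) (𝓝 (Jp x y)))
    (A : X →L[ℝ] X) (μ : ℝ)
    (hμ : Tendsto (fun h : ℝ => (‖ContinuousLinearMap.id ℝ X + h • A‖ - 1) / h)
      (𝓝[>] (0:ℝ)) (𝓝 μ)) :
    μ = sSup {r : ℝ | ∃ x : X, ‖x‖ = 1 ∧ r = Jp (A x) x} := by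
  have hlub := lognorm_eq_sup_upper_JMT_pairing_general (fun x _ => hJp (A x) x) hμ
  exact (hlub.csSup_eq hlub.nonempty).symm
end

section
/- Let (X,‖·‖) be a real normed space that is Gateaux differentiable, i.e. for every y ≠ 0 and every x ∈ X the two-sided limit lim_{h→0}(‖y+hx‖−‖y‖)/h exists. Then every weak pairing ⟦·,·⟧ on X compatible with the norm and satisfying the straight angle property ⟦−x,x⟧ = −‖x‖² is uniquely determined: for every x ∈ X and every y ≠ 0, ⟦x,y⟧ = ‖y‖·lim_{h→0}(‖y+hx‖−‖y‖)/h, and ⟦x,0⟧ = 0. -/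
open Filter Topology MeasureTheory

/-- A weak pairing on a real vector space `X`. -/
structure WeakPairing (X : Type*) [AddCommGroup X] [Module ℝ X] where
  pair : X → X → ℝ
  subadd : ∀ x₁ x₂ y : X, pair (x₁ + x₂) y ≤ pair x₁ y + pair x₂ y
  smul_left : ∀ (α : ℝ), 0 ≤ α → ∀ x y : X, pair (α • x) y = α * pair x y
  smul_right : ∀ (α : ℝ), 0 ≤ α → ∀ x y : X, pair x (α • y) = α * pair x y
  neg_neg_eq : ∀ x y : X, pair (-x) (-y) = pair x y
  pos_def : ∀ x : X, x ≠ 0 → 0 < pair x x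
  cauchy_schwarz : ∀ x y : X, pair x y ≤ Real.sqrt (pair x x * pair y y)

/-! Subadditivity bounds `P.pair (y + t • x) y` below by `P.pair y y + t * P.pair x y`: for `t ≤ 0`
by cancelling `t • x`, for `0 ≤ t` by cancelling `y`, which is where the straight angle property
enters. By Cauchy–Schwarz, `‖y + t • x‖ * ‖y‖ - t * P.pair x y` is then minimal at `t = 0`, so its
derivative `‖y‖ * L - P.pair x y` there vanishes. -/

namespace WeakPairing

section Module

variable {X : Type*} [AddCommGroup X] [Module ℝ X] (P : WeakPairing X)

theorem pair_zero_right (x : X) : P.pair x 0 = 0 := by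
  simpa only [zero_smul, zero_mul] using P.smul_right 0 le_rfl x 0

theorem pair_self_add_mul_le_pair_add_smul {y : X} (hstraight : P.pair (-y) y = -P.pair y y)
    (x : X) (t : ℝ) : P.pair y y + t * P.pair x y ≤ P.pair (y + t • x) y := by
  rcases le_total 0 t with ht | ht
  · have hsub : P.pair (t • x) y ≤ P.pair (y + t • x) y + P.pair (-y) y := by
      simpa only [add_neg_cancel_comm] using P.subadd (y + t • x) (-y) y
    rw [P.smul_left t ht, hstraight] at hsub
    linarith
  · have hsub : P.pair y y ≤ P.pair (y + t • x) y + P.pair ((-t) • x) y := by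
      simpa only [neg_smul, add_neg_cancel_right] using P.subadd (y + t • x) ((-t) • x) y
    rw [P.smul_left (-t) (neg_nonneg.mpr ht)] at hsub
    linarith

end Module

section Compatible

variable {X : Type*} [SeminormedAddCommGroup X] [Module ℝ X] (P : WeakPairing X)

theorem pair_le_norm_mul_norm (hcompat : ∀ x : X, P.pair x x = ‖x‖ ^ 2) (x y : X) :
    P.pair x y ≤ ‖x‖ * ‖y‖ :=
  calc
    P.pair x y ≤ √(P.pair x x * P.pair y y) := P.cauchy_schwarz x y
    _ = √((‖x‖ * ‖y‖) ^ 2) := by rw [hcompat, hcompat, mul_pow]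
    _ = ‖x‖ * ‖y‖ := Real.sqrt_sq (by positivity)

theorem norm_sq_add_mul_pair_le (hcompat : ∀ x : X, P.pair x x = ‖x‖ ^ 2) {y : X}
    (hstraight : P.pair (-y) y = -‖y‖ ^ 2) (x : X) (t : ℝ) :
    ‖y‖ ^ 2 + t * P.pair x y ≤ ‖y + t • x‖ * ‖y‖ := by
  rw [← hcompat y] at hstraight ⊢
  exact (P.pair_self_add_mul_le_pair_add_smul hstraight x t).trans
    (P.pair_le_norm_mul_norm hcompat (y + t • x) y)

end Compatible

end WeakPairing

theorem hasLineDerivAt_norm_iff_tendsto_div {X : Type*} [SeminormedAddCommGroup X] [Module ℝ X]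
    {x y : X} {L : ℝ} :
    HasLineDerivAt ℝ (fun z : X => ‖z‖) L y x ↔
      Tendsto (fun h : ℝ => (‖y + h • x‖ - ‖y‖) / h) (𝓝[≠] 0) (𝓝 L) := by
  simp only [hasLineDerivAt_iff_tendsto_slope_zero, smul_eq_mul, div_eq_inv_mul]

theorem regular_pairing_unique_of_gateaux_general
    {X : Type*} [SeminormedAddCommGroup X] [Module ℝ X] (P : WeakPairing X)
    (hcompat : ∀ x : X, P.pair x x = ‖x‖ ^ 2) {x y : X}
    (hstraight : P.pair (-y) y = -‖y‖ ^ 2) {L : ℝ}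
    (hL : HasLineDerivAt ℝ (fun z : X => ‖z‖) L y x) :
    P.pair x y = ‖y‖ * L := by
  let g : ℝ → ℝ := fun t => ‖y + t • x‖ * ‖y‖ - t * P.pair x y
  have hmin : IsLocalMin g 0 := Eventually.of_forall fun t => by
    have hle := P.norm_sq_add_mul_pair_le hcompat hstraight x t
    simp only [g, zero_smul, add_zero, zero_mul, sub_zero]
    linarith
  have hderiv : HasDerivAt g (L * ‖y‖ - 1 * P.pair x y) 0 :=
    (HasDerivAt.mul_const hL ‖y‖).sub ((hasDerivAt_id 0).mul_const (P.pair x y))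
  linarith [hmin.hasDerivAt_eq_zero hderiv]

/-- on a Gateaux differentiable normed space, a regular pairing
compatible with the norm is uniquely determined: it equals the (two-sided)
norm derivative pairing `‖y‖ · lim_{h→0}(‖y+hx‖−‖y‖)/h`. -/
theorem regular_pairing_unique_of_gateaux
    (X : Type*) [NormedAddCommGroup X] [NormedSpace ℝ X]
    (hG : ∀ y : X, y ≠ 0 → ∀ x : X, ∃ L : ℝ,
      Tendsto (fun h : ℝ => (‖y + h • x‖ - ‖y‖) / h) (𝓝[≠] (0:ℝ)) (𝓝 L))
    (P : WeakPairing X) (hcompat : ∀ x : X, P.pair x x = ‖x‖ ^ 2)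
    (hstraight : ∀ x : X, P.pair (-x) x = -‖x‖ ^ 2) :
    (∀ x y : X, y ≠ 0 → ∀ L : ℝ,
      Tendsto (fun h : ℝ => (‖y + h • x‖ - ‖y‖) / h) (𝓝[≠] (0:ℝ)) (𝓝 L) →
      P.pair x y = ‖y‖ * L) ∧
    (∀ x : X, P.pair x (0 : X) = 0) := by
  exact ⟨fun x y _ L hL => regular_pairing_unique_of_gateaux_general P hcompat (hstraight y)
    (hasLineDerivAt_norm_iff_tendsto_div.mpr hL), P.pair_zero_right⟩
end

section
/- Let (X,‖·‖) be a real normed space and ⟦·,·⟧ a weak pairing on X compatible with the norm and satisfying the straight angle property ⟦−x,x⟧ = −‖x‖² for all x (a regular pairing). Let C ⊆ X be a convex set, b ∈ ℝ, t₀ ∈ ℝ, and f : ℝ × X → X satisfy the one-sided Lipschitz condition ⟦f(t,u) − f(t,w), u − w⟧ ≤ b·‖u−w‖² for all u,w ∈ C and t ≥ t₀. Let x, y : [t₀,∞) → X be differentiable curves with x′(t) = f(t,x(t)), y′(t) = f(t,y(t)) and x(t), y(t) ∈ C for all t ≥ t₀. Then for all t₀ ≤ s ≤ t: ‖x(t)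 − y(t)‖ ≤ e^{b(t−s)}·‖x(s) − y(s)‖. -/
open Filter Topology MeasureTheory

/-!
Put `z = x - y`. Sublinearity and the Cauchy–Schwarz inequality give
`‖z‖ (‖z‖ - ‖w‖) ≤ ⟦z - w, z⟧`. Taking `z = z t` and `w = z (t - h)` with `h > 0` bounds the upper
*left* Dini derivative of `‖z‖` by `⟦z', z⟧ / ‖z‖ ≤ b ‖z‖` where `z ≠ 0` (where `z = 0` it is
nonpositive), and Grönwall's inequality, applied with time reversed, gives the estimate.
-/

theorem le_exp_mul_of_frequently_slope_left_lt {g : ℝ → ℝ} {K a b : ℝ} (hab : a ≤ b)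
    (hg : ContinuousOn g (Set.Icc a b))
    (hslope : ∀ t ∈ Set.Ioc a b, ∀ r, K * g t < r → ∃ᶠ s in 𝓝[<] t, slope g t s < r) :
    g b ≤ Real.exp (K * (b - a)) * g a := by
  have hcont : ContinuousOn (fun τ ↦ -g (-τ)) (Set.Icc (-b) (-a)) :=
    (hg.comp continuousOn_neg fun τ hτ ↦ ⟨le_neg.2 hτ.2, neg_le.2 hτ.1⟩).neg
  have hright : ∀ τ ∈ Set.Ico (-b) (-a), ∀ r, K * g (-τ) < r →
      ∃ᶠ σ in 𝓝[>] τ, (σ - τ)⁻¹ * (-g (-σ) - -g (-τ)) < r := by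
    intro τ hτ r hr
    have hleft := hslope (-τ) ⟨lt_neg.2 hτ.2, neg_le.2 hτ.1⟩ r hr
    have hreversed : ∃ᶠ σ in 𝓝[>] τ, slope g (-τ) (-σ) < r :=
      tendsto_neg_nhdsLT_neg.frequently (by simpa only [neg_neg] using hleft)
    refine hreversed.mono fun σ hσ ↦ ?_
    rw [slope_def_field, ← neg_div_neg_eq] at hσ
    rw [inv_mul_eq_div]
    convert hσ using 2 <;> ring
  have hbound := le_gronwallBound_of_liminf_deriv_right_le (K := -K) (ε := 0)
    hcont hright le_rfl (fun τ _ ↦ by linarith) (-a) ⟨neg_le_neg hab, le_rfl⟩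
  have hexponent : -K * (-a - -b) = -(K * (b - a)) := by ring
  rw [gronwallBound_ε0, hexponent, neg_neg, neg_neg, neg_mul, neg_le_neg_iff,
    Real.exp_neg] at hbound
  rwa [mul_comm, ← div_le_iff₀ (Real.exp_pos _), div_eq_mul_inv]

namespace WeakPairing

section Module

variable {X : Type*} [AddCommGroup X] [Module ℝ X] (P : WeakPairing X)

theorem pair_sub_pair_le (x y z : X) : P.pair x z - P.pair y z ≤ P.pair (x - y) z := by
  have h := P.subadd (x - y) y z
  rw [sub_add_cancel] at h
  linarith

end Module

variable {X : Type*} [NormedAddCommGroup X] [NormedSpace ℝ X] {P : WeakPairing X}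

/-- A weak pairing is compatible with the norm if `⟦x, x⟧ = ‖x‖²` for all `x`. Together with
sublinearity and the Cauchy–Schwarz inequality, this is what lets the pairing control the growth
of the norm along a curve. -/
def IsCompatible (P : WeakPairing X) : Prop :=
  ∀ x, P.pair x x = ‖x‖ ^ 2

namespace IsCompatible

theorem pair_le_norm_mul_norm (hP : P.IsCompatible) (x y : X) : P.pair x y ≤ ‖x‖ * ‖y‖ := by
  have h := P.cauchy_schwarz x y
  rwa [hP, hP, ← mul_pow, Real.sqrt_sq (by positivity)] at h

theorem lipschitzWith_pair_left (hP : P.IsCompatible) (z : X) :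
    LipschitzWith ‖z‖₊ fun x ↦ P.pair x z :=
  .of_le_add_mul _ fun x y ↦ by
    rw [dist_eq_norm, coe_nnnorm, mul_comm, ← sub_le_iff_le_add']
    exact (P.pair_sub_pair_le x y z).trans (hP.pair_le_norm_mul_norm (x - y) z)

theorem norm_mul_norm_sub_norm_le (hP : P.IsCompatible) (z w : X) :
    ‖z‖ * (‖z‖ - ‖w‖) ≤ P.pair (z - w) z :=
  calc ‖z‖ * (‖z‖ - ‖w‖) = P.pair z z - ‖w‖ * ‖z‖ := by rw [hP]; ring
    _ ≤ P.pair z z - P.pair w z := sub_le_sub_left (hP.pair_le_norm_mul_norm w z) _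
    _ ≤ P.pair (z - w) z := P.pair_sub_pair_le z w z

theorem norm_mul_slope_norm_le (hP : P.IsCompatible) (z : ℝ → X) {s t : ℝ} (hst : s ≤ t) :
    ‖z t‖ * slope (fun τ ↦ ‖z τ‖) t s ≤ P.pair (slope z t s) (z t) := by
  have hinv : 0 ≤ (t - s)⁻¹ := inv_nonneg.2 (sub_nonneg.2 hst)
  rw [slope_comm, slope_comm z, slope_def_module, slope_def_module, P.smul_left _ hinv,
    smul_eq_mul, mul_left_comm]
  exact mul_le_mul_of_nonneg_left (hP.norm_mul_norm_sub_norm_le (z t) (z s)) hinv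

theorem eventually_slope_norm_lt (hP : P.IsCompatible) {z : ℝ → X} {v : X} {b r t : ℝ}
    (hz : HasDerivWithinAt z v (Set.Iic t) t) (hv : P.pair v (z t) ≤ b * ‖z t‖ ^ 2)
    (hr : b * ‖z t‖ < r) : ∀ᶠ s in 𝓝[<] t, slope (fun τ ↦ ‖z τ‖) t s < r := by
  rcases (norm_nonneg (z t)).eq_or_lt with hzero | hpos
  · rw [← hzero, mul_zero] at hr
    filter_upwards [self_mem_nhdsWithin] with s hs
    rw [slope_def_field, ← hzero, sub_zero]
    exact (div_nonpos_of_nonneg_of_nonpos (norm_nonneg _) (sub_nonpos.2 (le_of_lt hs))).trans_lt hr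
  · have hslope : Tendsto (slope z t) (𝓝[<] t) (𝓝 v) :=
      (hasDerivWithinAt_iff_tendsto_slope' Set.self_notMem_Iio).1 hz.Iio_of_Iic
    have hpair : Tendsto (fun s ↦ P.pair (slope z t s) (z t)) (𝓝[<] t) (𝓝 (P.pair v (z t))) :=
      ((hP.lipschitzWith_pair_left (z t)).continuous.tendsto v).comp hslope
    have hlt : P.pair v (z t) < ‖z t‖ * r :=
      calc P.pair v (z t) ≤ ‖z t‖ * (b * ‖z t‖) := by linarith
        _ < ‖z t‖ * r := mul_lt_mul_of_pos_left hr hpos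
    filter_upwards [hpair.eventually_lt_const hlt, self_mem_nhdsWithin] with s hs hst
    exact lt_of_mul_lt_mul_left ((hP.norm_mul_slope_norm_le z (le_of_lt hst)).trans_lt hs) hpos.le

theorem norm_le_exp_mul_norm (hP : P.IsCompatible) {z z' : ℝ → X} {b s t : ℝ} (hst : s ≤ t)
    (hcont : ContinuousOn z (Set.Icc s t))
    (hderiv : ∀ τ ∈ Set.Ioc s t, HasDerivWithinAt z (z' τ) (Set.Iic τ) τ)
    (hpair : ∀ τ ∈ Set.Ioc s t, P.pair (z' τ) (z τ) ≤ b * ‖z τ‖ ^ 2) :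
    ‖z t‖ ≤ Real.exp (b * (t - s)) * ‖z s‖ :=
  le_exp_mul_of_frequently_slope_left_lt hst hcont.norm fun τ hτ _ hr ↦
    (hP.eventually_slope_norm_lt (hderiv τ hτ) (hpair τ hτ) hr).frequently

end IsCompatible

end WeakPairing

theorem contraction_of_one_sided_lipschitz_general
    {X : Type*} [NormedAddCommGroup X] [NormedSpace ℝ X]
    {P : WeakPairing X} (hP : P.IsCompatible) {C : Set X} {b t₀ : ℝ} {f : ℝ → X → X}
    (hOSL : ∀ t, t₀ ≤ t → ∀ u ∈ C, ∀ w ∈ C, P.pair (f t u - f t w) (u - w) ≤ b * ‖u - w‖ ^ 2)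
    {x y : ℝ → X}
    (hx : ∀ t, t₀ ≤ t → HasDerivWithinAt x (f t (x t)) (Set.Ici t₀) t)
    (hy : ∀ t, t₀ ≤ t → HasDerivWithinAt y (f t (y t)) (Set.Ici t₀) t)
    (hxC : ∀ t, t₀ ≤ t → x t ∈ C) (hyC : ∀ t, t₀ ≤ t → y t ∈ C)
    {s t : ℝ} (hs : t₀ ≤ s) (hst : s ≤ t) :
    ‖x t - y t‖ ≤ Real.exp (b * (t - s)) * ‖x s - y s‖ := by
  have hderiv : ∀ τ, t₀ ≤ τ →
      HasDerivWithinAt (x - y) (f τ (x τ) - f τ (y τ)) (Set.Ici t₀) τ :=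
    fun τ hτ ↦ (hx τ hτ).sub (hy τ hτ)
  refine hP.norm_le_exp_mul_norm (z := x - y) (z' := fun τ ↦ f τ (x τ) - f τ (y τ))
    hst ?_ (fun τ hτ ↦ ?_) (fun τ hτ ↦ ?_)
  · exact (show ContinuousOn (x - y) (Set.Ici t₀) from
      fun τ hτ ↦ (hderiv τ hτ).continuousWithinAt).mono fun τ hτ ↦ hs.trans hτ.1
  · have hlt : t₀ < τ := hs.trans_lt hτ.1
    exact ((hderiv τ hlt.le).hasDerivAt (Ici_mem_nhds hlt)).hasDerivWithinAt
  · have hle : t₀ ≤ τ := hs.trans hτ.1.le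
    exact hOSL τ hle _ (hxC τ hle) _ (hyC τ hle)

/-- contraction estimate: if the vector field satisfies a
one-sided Lipschitz condition with constant `b` with respect to a regular
pairing, then any two solutions approach each other at rate `e^{b(t-s)}`. -/
theorem contraction_of_one_sided_lipschitz
    (X : Type*) [NormedAddCommGroup X] [NormedSpace ℝ X]
    (P : WeakPairing X) (hcompat : ∀ x : X, P.pair x x = ‖x‖ ^ 2)
    (hstraight : ∀ x : X, P.pair (-x) x = -‖x‖ ^ 2)
    (C : Set X) (hC : Convex ℝ C) (b t₀ : ℝ) (f : ℝ → X → X)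
    (hOSL : ∀ t : ℝ, t₀ ≤ t → ∀ u ∈ C, ∀ w ∈ C,
      P.pair (f t u - f t w) (u - w) ≤ b * ‖u - w‖ ^ 2)
    (x y : ℝ → X)
    (hx : ∀ t : ℝ, t₀ ≤ t → HasDerivAt x (f t (x t)) t)
    (hy : ∀ t : ℝ, t₀ ≤ t → HasDerivAt y (f t (y t)) t)
    (hxC : ∀ t : ℝ, t₀ ≤ t → x t ∈ C) (hyC : ∀ t : ℝ, t₀ ≤ t → y t ∈ C) :
    ∀ s t : ℝ, t₀ ≤ s → s ≤ t →
      ‖x t - y t‖ ≤ Real.exp (b * (t - s)) * ‖x s - y s‖ := by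
  intro s t hs hst
  exact contraction_of_one_sided_lipschitz_general hcompat hOSL
    (fun τ hτ ↦ (hx τ hτ).hasDerivWithinAt) (fun τ hτ ↦ (hy τ hτ).hasDerivWithinAt) hxC hyC hs hst
end
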